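/- Suppose ε = (ε_t)_{t∈[0,T]} is a bounded, jointly measurable, F-adapted process such that for every t ∈ [0,T], ε_t = E[∫_t^T exp(−∫_t^u ((1−α_s)r_s + α_s c_s) ds) · p_u du | F_t] almost surely. Then ε also solves the coupled close-out/collateral system: for every t ∈ [0,T], almost surely ε_t = E[∫_t^T exp(−∫_t^u r_s ds) · (p_u + (r_u − c_u)·α_u·ε_u) du | F_t]. In particular, for α ≡ 1 (perfect collateralization) the pre-default value satisfies ε_t = E[∫_t^T exp(−∫_t^u c_s ds) · p_u du | F_t]. -/

import Mathlib

open MeasureTheory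

/-!
Write `k = (r - c) α`, so that the blended rate is `(1 - α) r + α c = r - k`, and let `V_u` be the
pathwise value at time `u` of the coupon stream discounted at rate `r - k`. Integration by parts
along each path shows that `V` solves the linear equation
`V_t = ∫ₜᵀ D(t, u; r) (p_u + k_u V_u) du`. By hypothesis `ε_u = E[V_u | F_u]`, and `D(t, u; r) k_u`
is bounded and `F_u`-measurable, so by Fubini and the tower property `V_u` can be replaced by `ε_u`
inside the integral once `E[· | F_t]` is taken.
-/

/-- The discount factor `D(t, u; x) = exp (-∫ₜᵘ xₛ ds)` of a path `x` of the short rate. -/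
noncomputable def discountFactor (x : ℝ → ℝ) (t u : ℝ) : ℝ :=
  Real.exp (-∫ s in t..u, x s)

/-- The value at time `t`, along a path `x` of the discount rate, of the cash flow paid at rate `q`
over `[t, T]`. -/
noncomputable def presentValue (x q : ℝ → ℝ) (t T : ℝ) : ℝ :=
  ∫ u in t..T, discountFactor x t u * q u

section Pathwise

open Set Filter Topology AbsolutelyContinuousOnInterval

lemma absolutelyContinuousOnInterval_comp_of_lipschitzOnWith {X Y : Type*} [PseudoMetricSpace X]
    [PseudoMetricSpace Y] {f : ℝ → X} {g : X → Y} {K : NNReal} {a b : ℝ}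
    (hg : LipschitzOnWith K g (f '' uIcc a b)) (hf : AbsolutelyContinuousOnInterval f a b) :
    AbsolutelyContinuousOnInterval (g ∘ f) a b := by
  have hlim : Tendsto (fun E : ℕ × (ℕ → ℝ × ℝ) ↦
      (K : ℝ) * ∑ i ∈ Finset.range E.1, dist (f (E.2 i).1) (f (E.2 i).2))
      (totalLengthFilter ⊓ 𝓟 (disjWithin a b)) (𝓝 0) := by
    simpa only [mul_zero] using Tendsto.const_mul (K : ℝ) hf
  refine squeeze_zero' (.of_forall fun E ↦ Finset.sum_nonneg fun i _ ↦ dist_nonneg) ?_ hlim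
  filter_upwards [mem_inf_of_right (mem_principal_self _)] with E hE
  rw [Finset.mul_sum]
  exact Finset.sum_le_sum fun i hi ↦ hg.dist_le_mul _ (mem_image_of_mem f (hE.1 i hi).1) _
    (mem_image_of_mem f (hE.1 i hi).2)

lemma absolutelyContinuousOnInterval_comp_of_contDiff {f g : ℝ → ℝ} {a b : ℝ}
    (hg : ContDiff ℝ 1 g) (hf : AbsolutelyContinuousOnInterval f a b) :
    AbsolutelyContinuousOnInterval (g ∘ f) a b := by
  obtain ⟨K, hK⟩ := hg.locallyLipschitz.locallyLipschitzOn.exists_lipschitzOnWith_of_compact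
    (isCompact_uIcc.image_of_continuousOn hf.continuousOn)
  exact absolutelyContinuousOnInterval_comp_of_lipschitzOnWith hK hf

variable {x y q : ℝ → ℝ} {t u v T M N : ℝ}

lemma discountFactor_self : discountFactor x t t = 1 := by
  rw [discountFactor, intervalIntegral.integral_same, neg_zero, Real.exp_zero]

lemma discountFactor_pos : 0 < discountFactor x t u := Real.exp_pos _

lemma discountFactor_mul_discountFactor (htu : IntervalIntegrable x volume t u)
    (huv : IntervalIntegrable x volume u v) :
    discountFactor x t u * discountFactor x u v = discountFactor x t v := by
  simp only [discountFactor]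
  rw [← Real.exp_add, ← neg_add, intervalIntegral.integral_add_adjacent_intervals htu huv]

lemma discountFactor_sub_mul_discountFactor (hx : IntervalIntegrable x volume t u)
    (hy : IntervalIntegrable y volume t u) :
    discountFactor (fun s ↦ x s - y s) t u * discountFactor y t u = discountFactor x t u := by
  simp only [discountFactor]
  rw [← Real.exp_add, intervalIntegral.integral_sub hx hy]
  congr 1
  ring

lemma discountFactor_congr (h : EqOn x y (uIcc t u)) :
    discountFactor x t u = discountFactor y t u := by
  rw [discountFactor, discountFactor, intervalIntegral.integral_congr h]

lemma discountFactor_le (hx : ∀ s, ‖x s‖ ≤ M) :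
    discountFactor x t u ≤ Real.exp (M * |u - t|) :=
  Real.exp_le_exp.mpr <| (Real.le_norm_self _).trans <| (norm_neg _).trans_le <|
    intervalIntegral.norm_integral_le_of_norm_le_const fun s _ ↦ hx s

lemma absolutelyContinuousOnInterval_discountFactor (hx : IntervalIntegrable x volume t T) :
    AbsolutelyContinuousOnInterval (discountFactor x t) t T :=
  absolutelyContinuousOnInterval_comp_of_contDiff (g := fun z ↦ Real.exp (-z))
    (Real.contDiff_exp.comp contDiff_neg)
    (hx.absolutelyContinuousOnInterval_intervalIntegral left_mem_uIcc)

lemma ae_hasDerivAt_discountFactor (hx : IntervalIntegrable x volume t T) :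
    ∀ᵐ u, u ∈ uIcc t T → HasDerivAt (discountFactor x t) (-(x u * discountFactor x t u)) u := by
  filter_upwards [hx.ae_hasDerivAt_integral] with u hderiv hu
  exact (hderiv hu t left_mem_uIcc).fun_neg.exp.congr_deriv (by rw [discountFactor]; ring)

lemma intervalIntegrable_discountFactor_mul (hx : IntervalIntegrable x volume t T)
    (hq : IntervalIntegrable q volume t T) :
    IntervalIntegrable (fun u ↦ discountFactor x t u * q u) volume t T :=
  hq.continuousOn_mul (absolutelyContinuousOnInterval_discountFactor hx).continuousOn

lemma discountFactor_mul_presentValue (hx : IntervalIntegrable x volume t T)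
    (hu : u ∈ uIcc t T) :
    discountFactor x t u * presentValue x q u T = ∫ v in u..T, discountFactor x t v * q v := by
  rw [presentValue, ← intervalIntegral.integral_const_mul]
  refine intervalIntegral.integral_congr fun v hv ↦ ?_
  have htu := hx.mono_set (uIcc_subset_uIcc_left hu)
  have huv := hx.mono_set (uIcc_subset_uIcc hu (uIcc_subset_uIcc_right hu hv))
  simp only [← mul_assoc, discountFactor_mul_discountFactor htu huv]

lemma norm_presentValue_le (hx : ∀ s, ‖x s‖ ≤ M) (hq : ∀ s, ‖q s‖ ≤ N) :
    ‖presentValue x q t T‖ ≤ Real.exp (M * |T - t|) * N * |T - t| := by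
  have hM : 0 ≤ M := (norm_nonneg _).trans (hx 0)
  refine intervalIntegral.norm_integral_le_of_norm_le_const fun u hu ↦ ?_
  have hut : |u - t| ≤ |T - t| := abs_sub_left_of_mem_uIcc (uIoc_subset_uIcc hu)
  rw [norm_mul, Real.norm_of_nonneg discountFactor_pos.le]
  calc discountFactor x t u * ‖q u‖
      ≤ Real.exp (M * |u - t|) * N :=
        mul_le_mul (discountFactor_le hx) (hq u) (norm_nonneg _) (Real.exp_pos _).le
    _ ≤ Real.exp (M * |T - t|) * N := by
        have hN : 0 ≤ N := (norm_nonneg _).trans (hq 0)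
        gcongr

-- Integration by parts of the discount factor against the tail integral `u ↦ ∫ v in u..T, q v`,
-- both of which are only absolutely continuous since `y` and `q` need not be continuous.
lemma integral_eq_integral_discountFactor_mul_add_tail (hy : IntervalIntegrable y volume t T)
    (hq : IntervalIntegrable q volume t T) :
    ∫ u in t..T, q u =
      ∫ u in t..T, discountFactor y t u * (q u + y u * ∫ v in u..T, q v) := by
  set tail : ℝ → ℝ := fun u ↦ (∫ v in t..T, q v) - ∫ v in t..u, q v with tail_def
  have htail : AbsolutelyContinuousOnInterval tail t T :=
    (LipschitzWith.const _).lipschitzOnWith.absolutelyContinuousOnInterval.fun_sub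
      (hq.absolutelyContinuousOnInterval_intervalIntegral left_mem_uIcc)
  have hparts := (absolutelyContinuousOnInterval_discountFactor hy).integral_deriv_mul_eq_sub htail
  have tail_left : tail t = ∫ u in t..T, q u := by
    simp only [tail_def, intervalIntegral.integral_same, sub_zero]
  have tail_right : tail T = 0 := sub_self _
  rw [tail_left, tail_right, discountFactor_self, mul_zero, one_mul, zero_sub] at hparts
  rw [← neg_eq_iff_eq_neg.mpr hparts, ← intervalIntegral.integral_neg]
  refine intervalIntegral.integral_congr_ae ?_
  filter_upwards [ae_hasDerivAt_discountFactor hy, hq.ae_hasDerivAt_integral]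
    with u hdiscount hprimitive hu
  replace hu := uIoc_subset_uIcc hu
  have tail_eq : tail u = ∫ v in u..T, q v :=
    intervalIntegral.integral_interval_sub_left hq (hq.mono_set (uIcc_subset_uIcc_left hu))
  rw [(hdiscount hu).deriv, ((hprimitive hu t left_mem_uIcc).const_sub _).deriv, tail_eq]
  ring

lemma presentValue_sub (hx : IntervalIntegrable x volume t T)
    (hy : IntervalIntegrable y volume t T) (hq : IntervalIntegrable q volume t T) :
    presentValue (fun s ↦ x s - y s) q t T =
      presentValue x (fun u ↦ q u + y u * presentValue (fun s ↦ x s - y s) q u T) t T := by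
  have hxy := hx.sub hy
  rw [presentValue, integral_eq_integral_discountFactor_mul_add_tail hy
    (intervalIntegrable_discountFactor_mul hxy hq)]
  refine intervalIntegral.integral_congr fun u hu ↦ ?_
  have hsub := uIcc_subset_uIcc_left hu
  simp only [← discountFactor_mul_presentValue hxy hu,
    ← discountFactor_sub_mul_discountFactor (hx.mono_set hsub) (hy.mono_set hsub)]
  ring

end Pathwise

section Measurability

open Set Function

variable {β E : Type*} [MeasurableSpace β] [NormedAddCommGroup E] [NormedSpace ℝ E]

lemma stronglyMeasurable_intervalIntegral {μ : Measure ℝ} [SFinite μ] {f : β → ℝ → E}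
    {a b : β → ℝ} (hf : StronglyMeasurable (uncurry f)) (ha : Measurable a) (hb : Measurable b) :
    StronglyMeasurable fun z ↦ ∫ s in a z..b z, f z s ∂μ := by
  have integral_Ioc {l r : β → ℝ} (hl : Measurable l) (hr : Measurable r) :
      StronglyMeasurable fun z ↦ ∫ s in Ioc (l z) (r z), f z s ∂μ := by
    have hset : MeasurableSet {w : β × ℝ | w.2 ∈ Ioc (l w.1) (r w.1)} :=
      (measurableSet_lt (hl.comp measurable_fst) measurable_snd).inter
        (measurableSet_le measurable_snd (hr.comp measurable_fst))
    simp only [← integral_indicator measurableSet_Ioc]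
    exact (hf.indicator hset).integral_prod_right'
  exact (integral_Ioc ha hb).sub (integral_Ioc hb ha)

lemma measurable_discountFactor {x : β → ℝ → ℝ} {a b : β → ℝ} (hx : Measurable (uncurry x))
    (ha : Measurable a) (hb : Measurable b) :
    Measurable fun z ↦ discountFactor (x z) (a z) (b z) :=
  (stronglyMeasurable_intervalIntegral hx.stronglyMeasurable ha hb).measurable.neg.exp

lemma measurable_presentValue {x q : β → ℝ → ℝ} {a b : β → ℝ} (hx : Measurable (uncurry x))
    (hq : Measurable (uncurry q)) (ha : Measurable a) (hb : Measurable b) :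
    Measurable fun z ↦ presentValue (x z) (q z) (a z) (b z) := by
  have hdiscount : Measurable fun w : β × ℝ ↦ discountFactor (x w.1) (a w.1) w.2 :=
    measurable_discountFactor
      (hx.comp ((measurable_fst.comp measurable_fst).prodMk measurable_snd))
      (ha.comp measurable_fst) measurable_snd
  exact (stronglyMeasurable_intervalIntegral (hdiscount.mul hq).stronglyMeasurable ha hb).measurable

lemma intervalIntegrable_of_measurable_of_norm_le {f : ℝ → ℝ} {M a b : ℝ} (hf : Measurable f)
    (hM : ∀ s, ‖f s‖ ≤ M) : IntervalIntegrable f volume a b :=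
  (intervalIntegrable_const (c := M)).mono_fun' hf.aestronglyMeasurable (ae_of_all _ hM)

end Measurability

section Progressive

open Set Filter Function Topology

variable {Ω ι E : Type*} {m0 : MeasurableSpace Ω} [LinearOrder ι] [TopologicalSpace ι]
  [OrderClosedTopology ι] [SecondCountableTopology ι] [MeasurableSpace ι] [BorelSpace ι]
  [TopologicalSpace E] {F : Filtration ι m0} {f : ι → Ω → E}

lemma stronglyMeasurable_min_of_isStronglyProgressive (hf : IsStronglyProgressive F f) (u : ι) :
    StronglyMeasurable[Prod.instMeasurableSpace (m₂ := F u)]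
      fun z : ι × Ω ↦ f (min z.1 u) z.2 := by
  let _ : MeasurableSpace Ω := F u
  have hmin : Measurable fun z : ι × Ω ↦ ((⟨min z.1 u, min_le_right _ _⟩ : Iic u), z.2) :=
    ((measurable_fst.min measurable_const).subtype_mk).prodMk measurable_snd
  exact (hf u).comp_measurable hmin

lemma stronglyMeasurable_uncurry_of_isStronglyProgressive [TopologicalSpace.PseudoMetrizableSpace E]
    [Nonempty ι] [IsCountablyGenerated (atTop : Filter ι)] (hf : IsStronglyProgressive F f) :
    StronglyMeasurable (uncurry f) := by
  refine stronglyMeasurable_of_tendsto atTop (f := fun u (z : ι × Ω) ↦ f (min z.1 u) z.2)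
    (fun u ↦ (stronglyMeasurable_min_of_isStronglyProgressive hf u).mono
      (sup_le_sup le_rfl (MeasurableSpace.comap_mono (F.le u)))) (tendsto_pi_nhds.mpr fun z ↦ ?_)
  refine tendsto_const_nhds.congr' ?_
  filter_upwards [eventually_ge_atTop z.1] with u hu
  rw [min_eq_left hu, uncurry]

end Progressive

lemma measurable_discountFactor_of_isStronglyProgressive {Ω : Type*} {m0 : MeasurableSpace Ω}
    {F : Filtration ℝ m0} {r : ℝ → Ω → ℝ} {t u : ℝ} (hr : IsStronglyProgressive F r)
    (htu : t ≤ u) : Measurable[F u] fun ω ↦ discountFactor (fun s ↦ r s ω) t u := by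
  have hstopped (ω : Ω) :
      discountFactor (fun s ↦ r s ω) t u = discountFactor (fun s ↦ r (min s u) ω) t u :=
    discountFactor_congr fun s hs ↦ by
      rw [Set.uIcc_of_le htu] at hs
      simp only [min_eq_left hs.2]
  simp only [hstopped]
  let _ : MeasurableSpace Ω := F u
  exact measurable_discountFactor
    ((stronglyMeasurable_min_of_isStronglyProgressive hr u).measurable.comp measurable_swap)
    measurable_const measurable_const

section ConditionalExpectation

open Set Function

variable {Ω : Type*} {m m' m0 : MeasurableSpace Ω} {μ : Measure Ω}

lemma condExp_integral_congr {β E : Type*} [MeasurableSpace β] [NormedAddCommGroup E]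
    [NormedSpace ℝ E] [CompleteSpace E] {ν : Measure β} [SFinite ν] (hm : m ≤ m0)
    [SigmaFinite (μ.trim hm)] {f g : β → Ω → E} (hf : Integrable (uncurry f) (ν.prod μ))
    (hg : Integrable (uncurry g) (ν.prod μ)) (hfg : ∀ᵐ a ∂ν, μ[f a | m] =ᵐ[μ] μ[g a | m]) :
    μ[fun ω ↦ ∫ a, f a ω ∂ν | m] =ᵐ[μ] μ[fun ω ↦ ∫ a, g a ω ∂ν | m] := by
  have : SigmaFinite μ := .of_trim hm
  refine ae_eq_condExp_of_forall_setIntegral_eq hm hg.integral_prod_right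
    (fun s _ _ ↦ integrable_condExp.integrableOn) (fun s hs _ ↦ ?_)
    stronglyMeasurable_condExp.aestronglyMeasurable
  have hrestrict : ν.prod (μ.restrict s) ≤ ν.prod μ :=
    Measure.prod_mono le_rfl Measure.restrict_le_self
  calc ∫ ω in s, (μ[fun ω ↦ ∫ a, f a ω ∂ν | m]) ω ∂μ
      = ∫ ω in s, ∫ a, f a ω ∂ν ∂μ := setIntegral_condExp hm hf.integral_prod_right hs
    _ = ∫ a, ∫ ω in s, f a ω ∂μ ∂ν := (integral_integral_swap (hf.mono_measure hrestrict)).symm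
    _ = ∫ a, ∫ ω in s, g a ω ∂μ ∂ν := by
        refine integral_congr_ae ?_
        filter_upwards [hfg, hf.prod_right_ae, hg.prod_right_ae] with a hfga hfa hga
        rw [← setIntegral_condExp hm (f := f a) hfa hs, ← setIntegral_condExp hm (f := g a) hga hs]
        exact setIntegral_congr_ae (hm s hs) (hfga.mono fun ω h _ ↦ h)
    _ = ∫ ω in s, ∫ a, g a ω ∂ν ∂μ := integral_integral_swap (hg.mono_measure hrestrict)

lemma condExp_add_mul_congr [IsFiniteMeasure μ] {A Z X Y : Ω → ℝ} {C : ℝ} (hmm' : m ≤ m')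
    (hm' : m' ≤ m0) (hA : Integrable A μ) (hZ : StronglyMeasurable[m'] Z) (hZC : ∀ ω, ‖Z ω‖ ≤ C)
    (hX : Integrable X μ) (hXY : Y =ᵐ[μ] μ[X | m']) :
    μ[A + Z * X | m] =ᵐ[μ] μ[A + Z * Y | m] := by
  have hZX : Integrable (Z * X) μ :=
    hX.bdd_mul (hZ.mono hm').aestronglyMeasurable (ae_of_all _ hZC)
  have hZY : Integrable (Z * Y) μ :=
    (integrable_condExp.congr hXY.symm).bdd_mul (hZ.mono hm').aestronglyMeasurable
      (ae_of_all _ hZC)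
  have hpull : μ[Z * X | m'] =ᵐ[μ] Z * Y :=
    (condExp_mul_of_stronglyMeasurable_left hZ hZX hX).trans hXY.symm.mul_left
  have htower : μ[Z * X | m] =ᵐ[μ] μ[Z * Y | m] :=
    (condExp_condExp_of_le hmm' hm').symm.trans (condExp_congr_ae hpull)
  exact (condExp_add hA hZX m).trans (htower.add_left.trans (condExp_add hA hZY m).symm)

end ConditionalExpectation

lemma integrable_uncurry_of_ae_ae_norm_le {β Ω E : Type*} [MeasurableSpace β] [MeasurableSpace Ω]
    [NormedAddCommGroup E] {ν : Measure β} {μ : Measure Ω} [IsFiniteMeasure ν] [IsFiniteMeasure μ]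
    {f : β → Ω → E} {C : ℝ} (hf : StronglyMeasurable (Function.uncurry f))
    (hC : ∀ᵐ a ∂ν, ∀ᵐ ω ∂μ, ‖f a ω‖ ≤ C) : Integrable (Function.uncurry f) (ν.prod μ) :=
  .of_bound hf.aestronglyMeasurable C <|
    (Measure.ae_prod_iff_ae_ae (measurableSet_le hf.norm.measurable measurable_const)).mpr hC

section Valuation

open Set Function

variable {Ω : Type*} {m0 : MeasurableSpace Ω} {Q : Measure Ω} [IsFiniteMeasure Q]
  {F : Filtration ℝ m0} {r k p : ℝ → Ω → ℝ} {t T Mr Mk Mp : ℝ}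

lemma integrable_discountFactor_mul_add_mul {Y : ℝ → Ω → ℝ} {MY : ℝ}
    (hr : Measurable (uncurry r)) (hk : Measurable (uncurry k)) (hp : Measurable (uncurry p))
    (hY : Measurable (uncurry Y)) (hrM : ∀ s ω, ‖r s ω‖ ≤ Mr) (hkM : ∀ s ω, ‖k s ω‖ ≤ Mk)
    (hpM : ∀ s ω, ‖p s ω‖ ≤ Mp) (hYM : ∀ u ∈ Ioc t T, ∀ᵐ ω ∂Q, ‖Y u ω‖ ≤ MY) :
    Integrable (uncurry fun u ω ↦ discountFactor (fun s ↦ r s ω) t u * (p u ω + k u ω * Y u ω))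
      ((volume.restrict (Ioc t T)).prod Q) := by
  have hdiscount : Measurable fun z : ℝ × Ω ↦ discountFactor (fun s ↦ r s z.2) t z.1 :=
    measurable_discountFactor
      (hr.comp (measurable_snd.prodMk (measurable_snd.comp measurable_fst)))
      measurable_const measurable_fst
  refine integrable_uncurry_of_ae_ae_norm_le (C := Real.exp (Mr * |T - t|) * (Mp + Mk * MY))
    (hdiscount.mul (hp.add (hk.mul hY))).stronglyMeasurable ?_
  filter_upwards [ae_restrict_mem measurableSet_Ioc] with u hu
  filter_upwards [hYM u hu] with ω hYω
  have hMr : 0 ≤ Mr := (norm_nonneg _).trans (hrM u ω)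
  have hdiscount_le : discountFactor (fun s ↦ r s ω) t u ≤ Real.exp (Mr * |T - t|) := by
    have hdist : |u - t| ≤ |T - t| :=
      abs_sub_left_of_mem_uIcc (Icc_subset_uIcc (Ioc_subset_Icc_self hu))
    exact (discountFactor_le fun s ↦ hrM s ω).trans (by gcongr)
  have hsource_le : ‖p u ω + k u ω * Y u ω‖ ≤ Mp + Mk * MY :=
    norm_add_le_of_le (hpM u ω) (norm_mul_le_of_le (hkM u ω) hYω)
  exact norm_mul_le_of_le ((Real.norm_of_nonneg discountFactor_pos.le).trans_le hdiscount_le)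
    hsource_le

lemma condExp_presentValue_add_mul_congr {X Y : ℝ → Ω → ℝ} {MX : ℝ} (htT : t ≤ T)
    (hr : IsStronglyProgressive F r) (hk : IsStronglyProgressive F k) (hp : Measurable (uncurry p))
    (hrM : ∀ s ω, ‖r s ω‖ ≤ Mr) (hkM : ∀ s ω, ‖k s ω‖ ≤ Mk) (hpM : ∀ s ω, ‖p s ω‖ ≤ Mp)
    (hX : Measurable (uncurry X)) (hY : Measurable (uncurry Y))
    (hXM : ∀ u ∈ Ioc t T, ∀ ω, ‖X u ω‖ ≤ MX) (hYX : ∀ u ∈ Ioc t T, Y u =ᵐ[Q] Q[X u | F u]) :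
    Q[fun ω ↦ presentValue (fun s ↦ r s ω) (fun u ↦ p u ω + k u ω * X u ω) t T | F t] =ᵐ[Q]
      Q[fun ω ↦ presentValue (fun s ↦ r s ω) (fun u ↦ p u ω + k u ω * Y u ω) t T | F t] := by
  have hrmeas := (stronglyMeasurable_uncurry_of_isStronglyProgressive hr).measurable
  have hkmeas := (stronglyMeasurable_uncurry_of_isStronglyProgressive hk).measurable
  have hYM : ∀ u ∈ Ioc t T, ∀ᵐ ω ∂Q, ‖Y u ω‖ ≤ MX := fun u hu ↦ by
    filter_upwards [hYX u hu, ae_bdd_abs_condExp_of_ae_bdd_abs (m := F u) (ae_of_all Q (hXM u hu))]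
      with ω hω hbound
    exact hω ▸ hbound
  simp only [presentValue, intervalIntegral.integral_of_le htT]
  refine condExp_integral_congr (F.le t)
    (integrable_discountFactor_mul_add_mul hrmeas hkmeas hp hX hrM hkM hpM
      fun u hu ↦ ae_of_all Q (hXM u hu))
    (integrable_discountFactor_mul_add_mul hrmeas hkmeas hp hY hrM hkM hpM hYM) ?_
  filter_upwards [ae_restrict_mem measurableSet_Ioc] with u hu
  have hdiscount := measurable_discountFactor_of_isStronglyProgressive hr hu.1.le
  have hdiscount_le (ω : Ω) :
      ‖discountFactor (fun s ↦ r s ω) t u‖ ≤ Real.exp (Mr * |u - t|) :=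
    (Real.norm_of_nonneg discountFactor_pos.le).trans_le (discountFactor_le fun s ↦ hrM s ω)
  simp only [mul_add, ← mul_assoc]
  refine condExp_add_mul_congr (C := Real.exp (Mr * |u - t|) * Mk) (F.mono hu.1.le) (F.le u)
    (Integrable.of_bound (C := Real.exp (Mr * |u - t|) * Mp)
      ((hdiscount.mono (F.le u) le_rfl).mul hp.of_uncurry_left).aestronglyMeasurable
      (ae_of_all Q fun ω ↦ norm_mul_le_of_le (hdiscount_le ω) (hpM u ω)))
    (hdiscount.stronglyMeasurable.mul (hk.stronglyAdapted u))
    (fun ω ↦ norm_mul_le_of_le (hdiscount_le ω) (hkM u ω))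
    (Integrable.of_bound hX.of_uncurry_left.aestronglyMeasurable MX (ae_of_all Q (hXM u hu)))
    (hYX u hu)

lemma ae_eq_condExp_presentValue_of_ae_eq_condExp_presentValue_sub {ε : ℝ → Ω → ℝ} (htT : t ≤ T)
    (hr : IsStronglyProgressive F r) (hk : IsStronglyProgressive F k) (hp : Measurable (uncurry p))
    (hrM : ∀ s ω, ‖r s ω‖ ≤ Mr) (hkM : ∀ s ω, ‖k s ω‖ ≤ Mk) (hpM : ∀ s ω, ‖p s ω‖ ≤ Mp)
    (hεmeas : Measurable (uncurry ε))
    (hε : ∀ u ∈ Icc t T, ε u =ᵐ[Q]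
      Q[fun ω ↦ presentValue (fun s ↦ r s ω - k s ω) (fun s ↦ p s ω) u T | F u]) :
    ε t =ᵐ[Q] Q[fun ω ↦
      presentValue (fun s ↦ r s ω) (fun u ↦ p u ω + k u ω * ε u ω) t T | F t] := by
  set V : ℝ → Ω → ℝ := fun u ω ↦
    presentValue (fun s ↦ r s ω - k s ω) (fun s ↦ p s ω) u T
  have hrmeas := (stronglyMeasurable_uncurry_of_isStronglyProgressive hr).measurable
  have hkmeas := (stronglyMeasurable_uncurry_of_isStronglyProgressive hk).measurable
  have hVmeas : Measurable (uncurry V) := by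
    have hswap : Measurable fun z : (ℝ × Ω) × ℝ ↦ (z.2, z.1.2) :=
      measurable_snd.prodMk (measurable_snd.comp measurable_fst)
    exact measurable_presentValue (β := ℝ × Ω) ((hrmeas.sub hkmeas).comp hswap) (hp.comp hswap)
      measurable_fst measurable_const
  have hVM : ∀ u ∈ Ioc t T, ∀ ω, ‖V u ω‖ ≤ Real.exp ((Mr + Mk) * |T - t|) * Mp * |T - t| := by
    intro u hu ω
    have hMr : 0 ≤ Mr := (norm_nonneg _).trans (hrM u ω)
    have hMk : 0 ≤ Mk := (norm_nonneg _).trans (hkM u ω)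
    have hMp : 0 ≤ Mp := (norm_nonneg _).trans (hpM u ω)
    have hdist : |T - u| ≤ |T - t| :=
      abs_sub_right_of_mem_uIcc (Icc_subset_uIcc (Ioc_subset_Icc_self hu))
    refine (norm_presentValue_le (fun s ↦ norm_sub_le_of_le (hrM s ω) (hkM s ω))
      fun s ↦ hpM s ω).trans ?_
    gcongr
  have hV_eq (ω : Ω) : V t ω =
      presentValue (fun s ↦ r s ω) (fun u ↦ p u ω + k u ω * V u ω) t T :=
    presentValue_sub
      (intervalIntegrable_of_measurable_of_norm_le hrmeas.of_uncurry_right fun s ↦ hrM s ω)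
      (intervalIntegrable_of_measurable_of_norm_le hkmeas.of_uncurry_right fun s ↦ hkM s ω)
      (intervalIntegrable_of_measurable_of_norm_le hp.of_uncurry_right fun s ↦ hpM s ω)
  calc ε t
      =ᵐ[Q] Q[V t | F t] := hε t ⟨le_rfl, htT⟩
    _ = Q[fun ω ↦ presentValue (fun s ↦ r s ω) (fun u ↦ p u ω + k u ω * V u ω) t T | F t] :=
        congrArg (fun X ↦ Q[X | F t]) (funext hV_eq)
    _ =ᵐ[Q] Q[fun ω ↦ presentValue (fun s ↦ r s ω) (fun u ↦ p u ω + k u ω * ε u ω) t T | F t] :=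
        condExp_presentValue_add_mul_congr htT hr hk hp hrM hkM hpM hVmeas hεmeas hVM
          fun u hu ↦ hε u ⟨hu.1.le, hu.2⟩

theorem stmt_5_general {c α ε : ℝ → Ω → ℝ} {t₀ Mc Mα : ℝ} (hr : IsStronglyProgressive F r)
    (hc : IsStronglyProgressive F c) (hp : Measurable (uncurry p))
    (hα : IsStronglyProgressive F α) (hrM : ∀ t ω, ‖r t ω‖ ≤ Mr) (hcM : ∀ t ω, ‖c t ω‖ ≤ Mc)
    (hpM : ∀ t ω, ‖p t ω‖ ≤ Mp) (hαM : ∀ t ω, ‖α t ω‖ ≤ Mα) (hεmeas : Measurable (uncurry ε))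
    (hε : ∀ t, t₀ ≤ t → t ≤ T → ε t =ᵐ[Q] Q[fun ω ↦ presentValue
      (fun s ↦ (1 - α s ω) * r s ω + α s ω * c s ω) (fun u ↦ p u ω) t T | F t]) :
    (∀ t, t₀ ≤ t → t ≤ T → ε t =ᵐ[Q] Q[fun ω ↦ presentValue (fun s ↦ r s ω)
      (fun u ↦ p u ω + (r u ω - c u ω) * α u ω * ε u ω) t T | F t]) ∧
    ((∀ t ω, α t ω = 1) → ∀ t, t₀ ≤ t → t ≤ T →
      ε t =ᵐ[Q] Q[fun ω ↦ presentValue (fun s ↦ c s ω) (fun u ↦ p u ω) t T | F t]) := by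
  refine ⟨fun t ht htT ↦ ?_, fun hα_one t ht htT ↦ ?_⟩
  · have blended_rate (s : ℝ) (ω : Ω) : (1 - α s ω) * r s ω + α s ω * c s ω =
        r s ω - (r s ω - c s ω) * α s ω := by ring
    simp only [blended_rate] at hε
    exact ae_eq_condExp_presentValue_of_ae_eq_condExp_presentValue_sub htT hr ((hr.sub hc).mul hα)
      hp hrM (fun s ω ↦ norm_mul_le_of_le (norm_sub_le_of_le (hrM s ω) (hcM s ω)) (hαM s ω)) hpM
      hεmeas fun u hu ↦ hε u (ht.trans hu.1) hu.2
  · simpa only [hα_one, sub_self, zero_mul, one_mul, zero_add] using hε t ht htT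

end Valuation

/-- The close-out value discounted at the blended rate
`(1−α)r + αc` solves the coupled close-out/collateral system; in particular,
under perfect collateralization (`α ≡ 1`) it is the collateral-discounted value. -/
theorem stmt_5
    {Ω : Type*} {m0 : MeasurableSpace Ω} {Q : Measure Ω} [IsProbabilityMeasure Q]
    (F : Filtration ℝ m0)
    (T : ℝ) (hT : 0 ≤ T)
    (r c p α : ℝ → Ω → ℝ)
    (hr : ProgMeasurable F r) (hc : ProgMeasurable F c)
    (hp : ProgMeasurable F p) (hα : ProgMeasurable F α)
    (Mr Mc Mp : ℝ)
    (hrbdd : ∀ t ω, |r t ω| ≤ Mr) (hcbdd : ∀ t ω, |c t ω| ≤ Mc)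
    (hpbdd : ∀ t ω, |p t ω| ≤ Mp)
    (hα01 : ∀ t ω, α t ω ∈ Set.Icc (0 : ℝ) 1)
    (ε : ℝ → Ω → ℝ)
    (Mε : ℝ) (hεbdd : ∀ t ω, |ε t ω| ≤ Mε)
    (hεmeas : Measurable (Function.uncurry ε))
    (hεadapted : Adapted F ε)
    (hε : ∀ t, 0 ≤ t → t ≤ T →
      ε t =ᵐ[Q] Q[(fun ω => ∫ u in t..T,
        Real.exp (-(∫ s in t..u, ((1 - α s ω) * r s ω + α s ω * c s ω))) * p u ω) | F t]) :
    (∀ t, 0 ≤ t → t ≤ T →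
      ε t =ᵐ[Q] Q[(fun ω => ∫ u in t..T,
        Real.exp (-(∫ s in t..u, r s ω)) *
          (p u ω + (r u ω - c u ω) * α u ω * ε u ω)) | F t])
    ∧ ((∀ t ω, α t ω = 1) →
      ∀ t, 0 ≤ t → t ≤ T →
        ε t =ᵐ[Q] Q[(fun ω => ∫ u in t..T,
          Real.exp (-(∫ s in t..u, c s ω)) * p u ω) | F t]) :=
  stmt_5_general hr hc (stronglyMeasurable_uncurry_of_isStronglyProgressive hp).measurable hα hrbdd
    hcbdd hpbdd (fun t ω ↦ abs_le.mpr ⟨by linarith [(hα01 t ω).1], (hα01 t ω).2⟩) hεmeas hε
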